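/- Let A be a unital complex Banach algebra and let e ∈ A be invertible with ‖e‖ ≤ 1 (so A_e is unital). If A is approximately biprojective, then A_e is approximately biprojective: there exists a net of continuous linear maps σ_i : A → A⊗A such that for all a, b ∈ A: (a·e)·σ_i(b) − σ_i(a·e·b) → 0 and σ_i(a·e·b) − σ_i(a)·(e·b) → 0 in A⊗A, and π_e(σ_i(a)) → a in A, where π_e : A⊗A → A is the linear map with π_e(x⊗y) = x·e·y. -/

import Mathlib

open Filter Topology TensorProduct

/-- The projective tensor seminorm on the algebraic tensor product `A ⊗[ℂ] A`:
the infimum of `∑ ‖xᵢ‖‖yᵢ‖` over all representations `z = ∑ xᵢ ⊗ yᵢ`. -/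
noncomputable def projSN {A : Type*} [NormedRing A] [NormedAlgebra ℂ A]
    (z : TensorProduct ℂ A A) : ℝ :=
  sInf {r : ℝ | ∃ (n : ℕ) (x y : Fin n → A),
    z = ∑ i, x i ⊗ₜ[ℂ] y i ∧ r = ∑ i, ‖x i‖ * ‖y i‖}

theorem projSN_set_bdd {A : Type*} [NormedRing A] [NormedAlgebra ℂ A]
    (z : TensorProduct ℂ A A) : BddBelow {r : ℝ | ∃ (n : ℕ) (x y : Fin n → A),
    z = ∑ i, x i ⊗ₜ[ℂ] y i ∧ r = ∑ i, ‖x i‖ * ‖y i‖} := by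
  refine ⟨0, ?_⟩
  rintro r ⟨n, x, y, -, rfl⟩
  positivity

theorem projSN_set_nonempty {A : Type*} [NormedRing A] [NormedAlgebra ℂ A]
    (z : TensorProduct ℂ A A) : {r : ℝ | ∃ (n : ℕ) (x y : Fin n → A),
    z = ∑ i, x i ⊗ₜ[ℂ] y i ∧ r = ∑ i, ‖x i‖ * ‖y i‖}.Nonempty := by
  suffices h : ∃ (n : ℕ) (x y : Fin n → A), z = ∑ i, x i ⊗ₜ[ℂ] y i by
    obtain ⟨n, x, y, h⟩ := h
    exact ⟨_, n, x, y, h, rfl⟩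
  induction z with
  | zero => exact ⟨0, 0, 0, by simp⟩
  | tmul x y => exact ⟨1, fun _ => x, fun _ => y, by simp⟩
  | add u v hu hv =>
    obtain ⟨n, x, y, rfl⟩ := hu
    obtain ⟨m, x', y', rfl⟩ := hv
    exact ⟨n + m, Fin.append x x', Fin.append y y', by simp [Fin.sum_univ_add]⟩

theorem projSN_nonneg {A : Type*} [NormedRing A] [NormedAlgebra ℂ A]
    (z : TensorProduct ℂ A A) : 0 ≤ projSN z := by
  apply Real.sInf_nonneg
  rintro r ⟨n, x, y, -, rfl⟩
  positivity

theorem projSN_lTensor {A : Type*} [NormedRing A] [NormedAlgebra ℂ A]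
    (f : A) (z : TensorProduct ℂ A A) :
    projSN (LinearMap.lTensor A (LinearMap.mulLeft ℂ f) z) ≤ ‖f‖ * projSN z := by
  have key : ∀ r ∈ {r : ℝ | ∃ (n : ℕ) (x y : Fin n → A),
      z = ∑ i, x i ⊗ₜ[ℂ] y i ∧ r = ∑ i, ‖x i‖ * ‖y i‖},
      projSN (LinearMap.lTensor A (LinearMap.mulLeft ℂ f) z) ≤ ‖f‖ * r := by
    rintro r ⟨n, x, y, hz, rfl⟩
    refine (csInf_le (projSN_set_bdd _) ⟨n, x, fun i => f * y i, ?_, rfl⟩).trans ?_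
    · rw [hz]; simp
    · rw [Finset.mul_sum]
      refine Finset.sum_le_sum fun i _ => ?_
      calc ‖x i‖ * ‖f * y i‖ ≤ ‖x i‖ * (‖f‖ * ‖y i‖) := by gcongr; exact norm_mul_le _ _
        _ = _ := by ring
  rcases (norm_nonneg f).eq_or_lt with h | h
  · obtain ⟨r, hr⟩ := projSN_set_nonempty z
    have := key r hr
    rw [← h] at this ⊢
    simpa using this
  · rw [← div_le_iff₀' h]
    refine le_csInf (projSN_set_nonempty z) fun r hr => ?_
    rw [div_le_iff₀' h]
    exact key r hr

/-- Let `A` be a unital complex Banach algebra and `e ∈ A`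
invertible (with inverse `f`) with `‖e‖ ≤ 1`.  If `A` is approximately
biprojective, then `A_e` is approximately biprojective: there is a net of
continuous linear maps `σᵢ : A → A ⊗ A` with `(a*e)·σᵢ(b) − σᵢ(a*e*b) → 0`,
`σᵢ(a*e*b) − σᵢ(a)·(e*b) → 0` (projective tensor seminorm) and
`π_e(σᵢ(a)) → a`, where `π_e (x ⊗ y) = x*e*y`.
(Continuity of a linear map into `A ⊗ A` is expressed as boundedness for the
projective seminorm.) -/
theorem stmt10 {A : Type*} [NormedRing A] [NormedAlgebra ℂ A] [CompleteSpace A]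
    (e f : A) (he : ‖e‖ ≤ 1) (hef : e * f = 1) (hfe : f * e = 1)
    (hA : ∃ (ι : Type) (l : Filter ι), l.NeBot ∧
      ∃ ρ : ι → (A →ₗ[ℂ] TensorProduct ℂ A A),
        (∀ i, ∃ C : ℝ, ∀ a : A, projSN (ρ i a) ≤ C * ‖a‖) ∧
        (∀ a b : A, Tendsto
          (fun i => projSN (LinearMap.rTensor A (LinearMap.mulLeft ℂ a) (ρ i b) -
            ρ i (a * b))) l (𝓝 0)) ∧
        (∀ a b : A, Tendsto
          (fun i => projSN (ρ i (b * a) -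
            LinearMap.lTensor A (LinearMap.mulRight ℂ a) (ρ i b))) l (𝓝 0)) ∧
        (∀ a : A, Tendsto
          (fun i => ‖LinearMap.mul' ℂ A (ρ i a) - a‖) l (𝓝 0))) :
    ∃ (ι : Type) (l : Filter ι), l.NeBot ∧
      ∃ σ : ι → (A →ₗ[ℂ] TensorProduct ℂ A A),
        (∀ i, ∃ C : ℝ, ∀ a : A, projSN (σ i a) ≤ C * ‖a‖) ∧
        (∀ a b : A, Tendsto
          (fun i => projSN (LinearMap.rTensor A (LinearMap.mulLeft ℂ (a * e)) (σ i b) -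
            σ i (a * e * b))) l (𝓝 0)) ∧
        (∀ a b : A, Tendsto
          (fun i => projSN (σ i (a * e * b) -
            LinearMap.lTensor A (LinearMap.mulRight ℂ (e * b)) (σ i a))) l (𝓝 0)) ∧
        (∀ a : A, Tendsto
          (fun i => ‖LinearMap.mul' ℂ A
            (LinearMap.lTensor A (LinearMap.mulLeft ℂ e) (σ i a)) - a‖) l (𝓝 0)) := by
  obtain ⟨ι, l, hl, ρ, hb, hL, hR, hp⟩ := hA
  have lim : ∀ g : ι → TensorProduct ℂ A A, Tendsto (fun i => projSN (g i)) l (𝓝 0) →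
      Tendsto (fun i => projSN (LinearMap.lTensor A (LinearMap.mulLeft ℂ f) (g i))) l (𝓝 0) := by
    intro g hg
    refine squeeze_zero (fun i => projSN_nonneg _) (fun i => projSN_lTensor f (g i)) ?_
    simpa using hg.const_mul ‖f‖
  refine ⟨ι, l, hl, fun i => LinearMap.lTensor A (LinearMap.mulLeft ℂ f) ∘ₗ ρ i, ?_, ?_, ?_, ?_⟩
  · intro i
    obtain ⟨C, hC⟩ := hb i
    refine ⟨‖f‖ * C, fun a => (projSN_lTensor f _).trans ?_⟩
    rw [mul_assoc]
    exact mul_le_mul_of_nonneg_left (hC a) (norm_nonneg f)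
  · intro a b
    refine (lim _ (hL (a * e) b)).congr fun i => ?_
    have comm : ∀ z : TensorProduct ℂ A A,
        LinearMap.lTensor A (LinearMap.mulLeft ℂ f)
          (LinearMap.rTensor A (LinearMap.mulLeft ℂ (a * e)) z) =
        LinearMap.rTensor A (LinearMap.mulLeft ℂ (a * e))
          (LinearMap.lTensor A (LinearMap.mulLeft ℂ f) z) := by
      intro z
      induction z with
      | zero => simp
      | tmul x y => simp
      | add u v hu hv => simp only [map_add, hu, hv]
    rw [map_sub, comm]
    rfl
  · intro a b
    refine (lim _ (hR (e * b) a)).congr fun i => ?_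
    have comm : ∀ z : TensorProduct ℂ A A,
        LinearMap.lTensor A (LinearMap.mulLeft ℂ f)
          (LinearMap.lTensor A (LinearMap.mulRight ℂ (e * b)) z) =
        LinearMap.lTensor A (LinearMap.mulRight ℂ (e * b))
          (LinearMap.lTensor A (LinearMap.mulLeft ℂ f) z) := by
      intro z
      induction z with
      | zero => simp
      | tmul x y => simp [mul_assoc]
      | add u v hu hv => simp only [map_add, hu, hv]
    rw [map_sub, comm, ← mul_assoc]
    rfl
  · intro a
    refine (hp a).congr fun i => ?_
    have comm : ∀ z : TensorProduct ℂ A A,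
        LinearMap.lTensor A (LinearMap.mulLeft ℂ e)
          (LinearMap.lTensor A (LinearMap.mulLeft ℂ f) z) = z := by
      intro z
      induction z with
      | zero => simp
      | tmul x y => simp [← mul_assoc, hef]
      | add u v hu hv => simp only [map_add, hu, hv]
    rw [LinearMap.comp_apply, comm]
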